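/- Let a > 1 and (k_n) an increasing sequence of positive integers with k_1 ≥ 2a and k_1 ≥ 5 and Σ 1/k_n < ∞. Then there exists a sequence of positive reals (d_n), n ≥ -1, with d_{-1} = 1, satisfying d_{2n} = k_{2n+2} d_{2n+1} + d_{2n+2} and d_{2n-1} = k_{2n+1} d_{2n} + d_{2n+1} + (a-1) δ_{2n}, where δ_{2n} = Σ_{s≥0} a^s d_{2n+4s+2} < ∞, and a real α > 1 such that 0 ≤ log(α d_n / Δ_n) < 2(a-1)/k_{n+2} for all n ≥ -1, where Δ_n = |q_n ρ - p_n| for ρ = [k_1, k_2, ...]. -/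

import Mathlib

open Filter

/-- Knaster-Tarski in a box of real sequences. -/
theorem box_fixed (D U : ℕ → ℝ) (hDU : ∀ m, D m ≤ U m) (T : (ℕ → ℝ) → (ℕ → ℝ))
    (hmono : ∀ g h : ℕ → ℝ, (∀ m, D m ≤ g m) → (∀ m, g m ≤ h m) → (∀ m, h m ≤ U m) →
      ∀ m, T g m ≤ T h m)
    (hD : ∀ m, D m ≤ T D m) (hU : ∀ m, T U m ≤ U m) :
    ∃ f : ℕ → ℝ, (∀ m, D m ≤ f m) ∧ (∀ m, f m ≤ U m) ∧ ∀ m, f m = T f m := by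
  classical
  let S : Set (ℕ → ℝ) := {g | (∀ m, D m ≤ g m) ∧ (∀ m, g m ≤ U m) ∧ ∀ m, g m ≤ T g m}
  have hDS : D ∈ S := ⟨fun m => le_rfl, hDU, hD⟩
  let f : ℕ → ℝ := fun m => sSup ((fun g : ℕ → ℝ => g m) '' S)
  have hle : ∀ g ∈ S, ∀ m, g m ≤ f m := by
    intro g hg m
    refine le_csSup ⟨U m, ?_⟩ ⟨g, hg, rfl⟩
    rintro _ ⟨h, hh, rfl⟩
    exact hh.2.1 m
  have hub : ∀ m c, (∀ g ∈ S, g m ≤ c) → f m ≤ c := by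
    intro m c hc
    refine csSup_le ⟨_, D, hDS, rfl⟩ ?_
    rintro _ ⟨h, hh, rfl⟩
    exact hc h hh
  have hDf : ∀ m, D m ≤ f m := hle D hDS
  have hfU : ∀ m, f m ≤ U m := fun m => hub m _ fun g hg => hg.2.1 m
  have hfT : ∀ m, f m ≤ T f m := fun m => hub m _ fun g hg =>
    (hg.2.2 m).trans (hmono g f hg.1 (hle g hg) hfU m)
  have hTU : ∀ m, T f m ≤ U m := fun m =>
    (hmono f U hDf hfU (fun _ => le_rfl) m).trans (hU m)
  have hTS : T f ∈ S :=
    ⟨fun m => (hDf m).trans (hfT m), hTU, fun m => hmono f (T f) hDf hfT hTU m⟩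
  exact ⟨f, hDf, hfU, fun m => le_antisymm (hfT m) (hle _ hTS m)⟩

theorem core_nat (a : ℝ) (ha : 1 < a) (K D : ℕ → ℝ) (hK : ∀ m, K m + 1 ≤ K (m + 1))
    (hK5 : 5 ≤ K 0) (hKa : 2 * a ≤ K 0) (hD : ∀ m, 0 < D m)
    (hrec : ∀ m, D m = K m * D (m + 1) + D (m + 2)) :
    ∃ f : ℕ → ℝ, (∀ m, D m ≤ f m) ∧ (∀ m, f m ≤ Real.exp ((a - 1) / K m) * D m) ∧
      (∀ m, Summable fun s : ℕ => a ^ s * f (m + 4 * s)) ∧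
      (∀ m, f m = K m * f (m + 1) + f (m + 2) +
        if Even m then (a - 1) * ∑' s : ℕ, a ^ s * f (m + 3 + 4 * s) else 0) ∧ D 0 < f 0 := by
  have hKm : Monotone K := monotone_nat_of_le_succ fun m => by linarith [hK m]
  have hK5' : ∀ m, 5 ≤ K m := fun m => hK5.trans (hKm (Nat.zero_le m))
  have hKa' : ∀ m, 2 * a ≤ K m := fun m => hKa.trans (hKm (Nat.zero_le m))
  have hKD : ∀ m, K m * D (m + 1) ≤ D m := fun m => by linarith [hrec m, hD (m + 2)]
  let u : ℕ → ℝ := fun m => Real.exp ((a - 1) / K m)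
  have hu0 : ∀ m, 0 < u m := fun m => Real.exp_pos _
  have hu1 : ∀ m, 1 ≤ u m := fun m => Real.one_le_exp
    (div_nonneg (by linarith) (by linarith [hK5' m]))
  have hustep : ∀ m, u (m + 1) * (1 + (a - 1) / (K m * K (m + 1))) ≤ u m := by
    intro m
    have h1 := hK5' m
    have h2 := hK5' (m + 1)
    have h3 : (a - 1) / K (m + 1) + (a - 1) / (K m * K (m + 1)) ≤ (a - 1) / K m := by
      rw [div_add_div _ _ (by positivity) (by positivity), div_le_div_iff₀ (by positivity) (by positivity)]
      have : 0 ≤ (a - 1) * (K m * K (m + 1)) * (K (m + 1) - K m - 1) :=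
        mul_nonneg (mul_nonneg (by linarith) (by positivity)) (by linarith [hK m])
      nlinarith
    calc u (m + 1) * (1 + (a - 1) / (K m * K (m + 1)))
        ≤ u (m + 1) * Real.exp ((a - 1) / (K m * K (m + 1))) := by
          refine mul_le_mul_of_nonneg_left ?_ (hu0 _).le
          linarith [Real.add_one_le_exp ((a - 1) / (K m * K (m + 1)))]
      _ = Real.exp ((a - 1) / K (m + 1) + (a - 1) / (K m * K (m + 1))) := by
          rw [Real.exp_add]
      _ ≤ u m := Real.exp_le_exp.2 h3
  have huanti : Antitone u := by
    refine antitone_nat_of_succ_le fun m => ?_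
    refine le_trans ?_ (hustep m)
    have h1 := hK5' m
    have h2 := hK5' (m + 1)
    have : 0 ≤ (a - 1) / (K m * K (m + 1)) := div_nonneg (by linarith) (by positivity)
    nlinarith [hu0 (m + 1)]
  let U : ℕ → ℝ := fun m => u m * D m
  have hU0 : ∀ m, 0 < U m := fun m => mul_pos (hu0 m) (hD m)
  have hDU : ∀ m, D m ≤ U m := fun m => le_mul_of_one_le_left (hD m).le (hu1 m)
  have hKU : ∀ m, K m * U (m + 1) ≤ U m := by
    intro m
    calc K m * (u (m + 1) * D (m + 1)) = u (m + 1) * (K m * D (m + 1)) := by ring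
      _ ≤ u m * D m := mul_le_mul (huanti (Nat.le_succ m)) (hKD m)
          (mul_nonneg (by linarith [hK5' m]) (hD _).le) (hu0 _).le
  have hUanti : ∀ m, U (m + 1) ≤ U m := fun m => by
    nlinarith [hKU m, hK5' m, hU0 (m + 1)]
  have hU4 : ∀ m, a * U (m + 4) ≤ 1 / 2 * U m := by
    intro m
    have h1 := hKU m
    have h2 : U (m + 4) ≤ U (m + 1) :=
      ((hUanti (m + 3)).trans (hUanti (m + 2))).trans (hUanti (m + 1))
    have h3 := hKa' m
    nlinarith [hU0 (m + 1), hU0 (m + 4)]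
  have hgeo : ∀ s m, a ^ s * U (m + 4 * s) ≤ (1 / 2) ^ s * U m := by
    intro s
    induction s with
    | zero => intro m; simp
    | succ s ih =>
      intro m
      have h1 := ih (m + 4)
      have h2 := hU4 m
      have e : m + 4 * (s + 1) = m + 4 + 4 * s := by ring
      rw [e, pow_succ', pow_succ']
      have h3 : (0 : ℝ) < (1 / 2) ^ s := by positivity
      calc a * a ^ s * U (m + 4 + 4 * s) = a * (a ^ s * U (m + 4 + 4 * s)) := by ring
        _ ≤ a * ((1 / 2) ^ s * U (m + 4)) := mul_le_mul_of_nonneg_left h1 (by linarith)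
        _ = (1 / 2) ^ s * (a * U (m + 4)) := by ring
        _ ≤ (1 / 2) ^ s * (1 / 2 * U m) := mul_le_mul_of_nonneg_left h2 h3.le
        _ = _ := by ring
  have hgs : ∀ m, HasSum (fun s : ℕ => (1 / 2 : ℝ) ^ s * U m) (2 * U m) := fun m =>
    hasSum_geometric_two.mul_right (U m)
  have hap : ∀ s : ℕ, 0 < a ^ s := fun s => pow_pos (by linarith) s
  have hsum : ∀ g : ℕ → ℝ, (∀ m, D m ≤ g m) → (∀ m, g m ≤ U m) → ∀ m,
      Summable fun s : ℕ => a ^ s * g (m + 4 * s) := by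
    intro g h1 h2 m
    refine Summable.of_nonneg_of_le (fun s => mul_nonneg (hap s).le ((hD _).le.trans (h1 _)))
      (fun s => ?_) (hgs m).summable
    exact (mul_le_mul_of_nonneg_left (h2 _) (hap s).le).trans (hgeo s m)
  have hUsum : ∀ m, ∑' s : ℕ, a ^ s * U (m + 4 * s) ≤ 2 * U m := by
    intro m
    rw [← (hgs m).tsum_eq]
    exact (hsum U hDU (fun _ => le_rfl) m).tsum_le_tsum (fun s => hgeo s m) (hgs m).summable
  have hDsum : ∀ m, 0 < ∑' s : ℕ, a ^ s * D (m + 4 * s) := by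
    intro m
    exact (hsum D (fun _ => le_rfl) hDU m).tsum_pos
      (fun s => (mul_pos (hap s) (hD _)).le) 0 (mul_pos (hap 0) (hD _))
  let T : (ℕ → ℝ) → (ℕ → ℝ) := fun f m => K m * f (m + 1) + f (m + 2) +
        if Even m then (a - 1) * ∑' s : ℕ, a ^ s * f (m + 3 + 4 * s) else 0
  have hTmono : ∀ g h : ℕ → ℝ, (∀ m, D m ≤ g m) → (∀ m, g m ≤ h m) → (∀ m, h m ≤ U m) →
      ∀ m, T g m ≤ T h m := by
    intro g h h1 h2 h3 m
    have e1 : K m * g (m + 1) ≤ K m * h (m + 1) :=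
      mul_le_mul_of_nonneg_left (h2 _) (by linarith [hK5' m])
    have e2 := h2 (m + 2)
    have e3 : ∑' s : ℕ, a ^ s * g (m + 3 + 4 * s) ≤ ∑' s : ℕ, a ^ s * h (m + 3 + 4 * s) :=
      (hsum g h1 (fun m => (h2 m).trans (h3 m)) (m + 3)).tsum_le_tsum
        (fun s => mul_le_mul_of_nonneg_left (h2 _) (hap s).le)
        (hsum h (fun m => (h1 m).trans (h2 m)) h3 (m + 3))
    have e4 := mul_le_mul_of_nonneg_left e3 (show 0 ≤ a - 1 by linarith)
    simp only [T]
    split_ifs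
    · linarith
    · linarith
  have hTD : ∀ m, D m ≤ T D m := by
    intro m
    have := mul_pos (show 0 < a - 1 by linarith) (hDsum (m + 3))
    simp only [T]
    split_ifs
    · linarith [hrec m]
    · linarith [hrec m]
  have hTU : ∀ m, T U m ≤ U m := by
    intro m
    have b0 := hK5' m
    have b1 := hK5' (m + 1)
    have b2 := hK5' (m + 2)
    have c1 : U (m + 2) ≤ u (m + 1) * D (m + 2) :=
      mul_le_mul_of_nonneg_right (huanti (Nat.le_succ _)) (hD _).le
    have c2 : U (m + 3) ≤ u (m + 1) * D (m + 3) :=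
      mul_le_mul_of_nonneg_right (huanti (by omega)) (hD _).le
    have c3 : 2 * D (m + 3) ≤ D m / (K m * K (m + 1)) := by
      rw [le_div_iff₀ (by positivity)]
      have d0 := hKD m
      have d1 := hKD (m + 1)
      have d2 := hKD (m + 2)
      calc 2 * D (m + 3) * (K m * K (m + 1)) = K m * (K (m + 1) * (2 * D (m + 3))) := by ring
        _ ≤ K m * (K (m + 1) * D (m + 2)) := by
            have : 2 * D (m + 3) ≤ D (m + 2) := by nlinarith [hD (m + 3)]
            gcongr
        _ ≤ K m * D (m + 1) := by gcongr
        _ ≤ D m := d0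
    have c4 : u (m + 1) * (D m + (a - 1) * (2 * D (m + 3))) ≤ U m := by
      calc u (m + 1) * (D m + (a - 1) * (2 * D (m + 3)))
          ≤ u (m + 1) * (D m + (a - 1) * (D m / (K m * K (m + 1)))) := by
            have := hu0 (m + 1)
            have := mul_le_mul_of_nonneg_left c3 (show 0 ≤ a - 1 by linarith)
            gcongr
        _ = u (m + 1) * (1 + (a - 1) / (K m * K (m + 1))) * D m := by ring
        _ ≤ u m * D m := mul_le_mul_of_nonneg_right (hustep m) (hD m).le
    have c5 : u (m + 1) * D m = K m * U (m + 1) + u (m + 1) * D (m + 2) := by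
      rw [hrec m]; simp only [U]; ring
    have c6 : 0 ≤ (a - 1) * (2 * (u (m + 1) * D (m + 3))) := by
      have := hu0 (m + 1)
      have := hD (m + 3)
      exact mul_nonneg (by linarith) (by positivity)
    have c7 : (a - 1) * ∑' s : ℕ, a ^ s * U (m + 3 + 4 * s)
        ≤ (a - 1) * (2 * (u (m + 1) * D (m + 3))) :=
      mul_le_mul_of_nonneg_left (by linarith [hUsum (m + 3)]) (by linarith)
    have c8 : u (m + 1) * (D m + (a - 1) * (2 * D (m + 3)))
      = u (m + 1) * D m + (a - 1) * (2 * (u (m + 1) * D (m + 3))) := by ring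
    show K m * U (m + 1) + U (m + 2) +
        (if Even m then (a - 1) * ∑' s : ℕ, a ^ s * U (m + 3 + 4 * s) else 0) ≤ U m
    split_ifs
    · linarith
    · linarith
  obtain ⟨f, f1, f2, f3⟩ := box_fixed D U hDU T hTmono hTD hTU
  refine ⟨f, f1, f2, hsum f f1 f2, f3, ?_⟩
  have h1 : T D 0 ≤ T f 0 := hTmono D f (fun _ => le_rfl) f1 f2 0
  have h2 : D 0 < T D 0 := by
    have := mul_pos (show 0 < a - 1 by linarith) (hDsum (0 + 3))
    simp only [T, Even.zero, if_true]
    linarith [hrec 0]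
  rw [f3 0]
  linarith

theorem cf_pos (K P Q : ℕ → ℝ) (hK : ∀ m, 1 ≤ K m) (P0 : P 0 = 1) (P1 : P 1 = 0)
    (Q0 : Q 0 = 0) (Q1 : Q 1 = 1) (hP : ∀ m, P (m + 2) = K m * P (m + 1) + P m)
    (hQ : ∀ m, Q (m + 2) = K m * Q (m + 1) + Q m) (ρ : ℝ)
    (hρ : Tendsto (fun n : ℕ => P (n + 1) / Q (n + 1)) atTop (nhds ρ)) (m : ℕ) :
    0 < (-1) ^ m * (P m - Q m * ρ) := by
  have hQp : ∀ m, 0 ≤ Q m ∧ 0 < Q (m + 1) := by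
    intro m
    induction m with
    | zero => simp [Q0, Q1]
    | succ m ih =>
      refine ⟨ih.2.le, ?_⟩
      rw [hQ m]
      nlinarith [hK m, ih.1, ih.2]
  have hW : ∀ m, P (m + 1) * Q m - P m * Q (m + 1) = (-1) ^ (m + 1) := by
    intro m
    induction m with
    | zero => simp [P0, P1, Q0, Q1]
    | succ m ih =>
      rw [hP m, hQ m, pow_succ, ← ih]; ring
  rcases m with _ | j
  · simp [P0, Q0]
  let x : ℕ → ℝ := fun i => (-1) ^ (j + 1) * (P (j + 2 * i + 1) / Q (j + 2 * i + 1))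
  have hx : StrictAnti x := by
    refine strictAnti_nat_of_succ_lt fun i => ?_
    simp only [x]
    have e : j + 2 * (i + 1) + 1 = (j + 2 * i + 1) + 2 := by ring
    rw [e]
    set n := j + 2 * i + 1 with hn
    have q1 : 0 < Q n := (hQp (j + 2 * i)).2
    have q2 : 0 < Q (n + 2) := (hQp (n + 1)).2
    have key : P n / Q n - P (n + 2) / Q (n + 2) = -(K n * (-1) ^ (n + 1)) / (Q n * Q (n + 2)) := by
      rw [div_sub_div _ _ q1.ne' q2.ne']
      congr 1
      rw [← hW n, hP n, hQ n]; ring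
    have sgn : ((-1 : ℝ) ^ (j + 1)) * (-1) ^ (n + 1) = -1 := by
      rw [← pow_add]
      exact Odd.neg_one_pow ⟨j + i + 1, by omega⟩
    have h4 : (-1 : ℝ) ^ (j + 1) * (P n / Q n - P (n + 2) / Q (n + 2))
        = K n / (Q n * Q (n + 2)) := by
      rw [key, mul_div_assoc']
      congr 1
      linear_combination (-K n) * sgn
    have h5 : 0 < K n / (Q n * Q (n + 2)) := div_pos (by linarith [hK n]) (mul_pos q1 q2)
    linarith
  have hlim : Tendsto x atTop (nhds ((-1) ^ (j + 1) * ρ)) := by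
    have ht : Tendsto (fun i : ℕ => j + 2 * i) atTop atTop :=
      tendsto_atTop_mono (fun i => by show i ≤ j + 2 * i; omega) tendsto_id
    exact (hρ.comp ht).const_mul _
  have h1 : (-1) ^ (j + 1) * ρ ≤ x 1 := hx.antitone.le_of_tendsto hlim 1
  have h2 : x 1 < x 0 := hx Nat.zero_lt_one
  have h3 : (-1) ^ (j + 1) * ρ < (-1) ^ (j + 1) * (P (j + 1) / Q (j + 1)) := lt_of_le_of_lt h1 h2
  have q1 : 0 < Q (j + 1) := (hQp j).2
  have h4 : (-1) ^ (j + 1) * (P (j + 1) - Q (j + 1) * ρ)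
      = Q (j + 1) * ((-1) ^ (j + 1) * (P (j + 1) / Q (j + 1)) - (-1) ^ (j + 1) * ρ) := by
    field_simp
  rw [h4]
  exact mul_pos q1 (by linarith)

theorem stmt4
    (a : ℝ) (ha : 1 < a)
    (k : ℤ → ℤ) (hkpos : ∀ n : ℤ, 1 ≤ n → 1 ≤ k n)
    (hkmono : ∀ n : ℤ, 1 ≤ n → k n < k (n + 1))
    (hk2a : 2 * a ≤ (k 1 : ℝ)) (hk5 : 5 ≤ k 1)
    (hksum : Summable (fun n : ℕ => 1 / (k (n + 1) : ℝ)))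
    (p q : ℤ → ℤ)
    (hp0 : p 0 = 0) (hq0 : q 0 = 1) (hpm : p (-1) = 1) (hqm : q (-1) = 0)
    (hp : ∀ n : ℤ, 1 ≤ n → p n = k n * p (n - 1) + p (n - 2))
    (hq : ∀ n : ℤ, 1 ≤ n → q n = k n * q (n - 1) + q (n - 2))
    (ρ : ℝ)
    (hρ : Tendsto (fun n : ℕ => (p n : ℝ) / (q n : ℝ)) atTop (nhds ρ)) :
    ∃ d : ℤ → ℝ, ∃ α : ℝ,
      1 < α ∧ d (-1) = 1 ∧ (∀ n : ℤ, -1 ≤ n → 0 < d n) ∧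
      (∀ n : ℤ, 0 ≤ n → Even n →
        Summable (fun s : ℕ => a ^ s * d (n + 4 * s + 2))) ∧
      (∀ n : ℤ, 0 ≤ n → Even n →
        d n = (k (n + 2) : ℝ) * d (n + 1) + d (n + 2)) ∧
      (∀ n : ℤ, -1 ≤ n → Odd n →
        d n = (k (n + 2) : ℝ) * d (n + 1) + d (n + 2) +
          (a - 1) * ∑' s : ℕ, a ^ s * d ((n + 1) + 4 * s + 2)) ∧
      (∀ n : ℤ, -1 ≤ n →
        0 ≤ Real.log (α * d n / |(q n : ℝ) * ρ - (p n : ℝ)|) ∧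
        Real.log (α * d n / |(q n : ℝ) * ρ - (p n : ℝ)|) <
          2 * (a - 1) / (k (n + 2) : ℝ)) := by
  let K : ℕ → ℝ := fun m => (k ((m : ℤ) + 1) : ℝ)
  let P : ℕ → ℝ := fun m => (p ((m : ℤ) - 1) : ℝ)
  let Q : ℕ → ℝ := fun m => (q ((m : ℤ) - 1) : ℝ)
  let D : ℕ → ℝ := fun m => (-1) ^ m * (P m - Q m * ρ)
  have hK1 : ∀ m, 1 ≤ K m := fun m => by
    simp only [K]; exact_mod_cast hkpos _ (by omega)
  have hKs : ∀ m, K m + 1 ≤ K (m + 1) := fun m => by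
    have := hkmono ((m : ℤ) + 1) (by omega)
    simp only [K]; push_cast; exact_mod_cast this
  have hP : ∀ m, P (m + 2) = K m * P (m + 1) + P m := fun m => by
    have := hp ((m : ℤ) + 1) (by omega)
    have e1 : ((m + 2 : ℕ) : ℤ) - 1 = m + 1 := by push_cast; ring
    have e2 : ((m + 1 : ℕ) : ℤ) - 1 = m + 1 - 1 := by push_cast; ring
    have e3 : (m : ℤ) - 1 = m + 1 - 2 := by ring
    simp only [P, K]; rw [e1, e2, e3]; exact_mod_cast this
  have hQ : ∀ m, Q (m + 2) = K m * Q (m + 1) + Q m := fun m => by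
    have := hq ((m : ℤ) + 1) (by omega)
    have e1 : ((m + 2 : ℕ) : ℤ) - 1 = m + 1 := by push_cast; ring
    have e2 : ((m + 1 : ℕ) : ℤ) - 1 = m + 1 - 1 := by push_cast; ring
    have e3 : (m : ℤ) - 1 = m + 1 - 2 := by ring
    simp only [Q, K]; rw [e1, e2, e3]; exact_mod_cast this
  have hDpos : ∀ m, 0 < D m := fun m => by
    refine cf_pos K P Q hK1 (by simp [P, hpm]) (by simp [P, hp0]) (by simp [Q, hqm])
      (by simp [Q, hq0]) hP hQ ρ ?_ m
    refine hρ.congr fun n => ?_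
    simp [P, Q]
  have hDrec : ∀ m, D m = K m * D (m + 1) + D (m + 2) := fun m => by
    simp only [D]; rw [hP m, hQ m]; ring
  obtain ⟨f, f1, f2, f3, f4, f5⟩ := core_nat a ha K D hKs
    (by simp only [K]; push_cast; exact_mod_cast hk5) (by simpa [K] using hk2a) hDpos hDrec
  have hD0 : D 0 = 1 := by simp [D, P, Q, hpm, hqm]
  have hf0 : 1 < f 0 := hD0 ▸ f5
  have hf0' : 0 < f 0 := by linarith
  have hfp : ∀ m, 0 < f m := fun m => (hDpos m).trans_le (f1 m)
  let d : ℤ → ℝ := fun n => f (n + 1).toNat / f 0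
  have hd : ∀ (n : ℤ) (m : ℕ), n + 1 = m → d n = f m / f 0 := by
    intro n m h
    simp only [d]; rw [h, Int.toNat_natCast]
  refine ⟨d, f 0, hf0, ?_, ?_, ?_, ?_, ?_, ?_⟩
  · rw [hd (-1) 0 (by norm_num), div_self hf0'.ne']
  · intro n _
    exact div_pos (hfp _) hf0'
  · intro n hn _
    obtain ⟨m, rfl⟩ := Int.eq_ofNat_of_zero_le hn
    refine ((f3 (m + 3)).div_const (f 0)).congr fun s => ?_
    rw [hd _ (m + 3 + 4 * s) (by push_cast; ring)]; ring
  · intro n hn he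
    obtain ⟨m, rfl⟩ := Int.eq_ofNat_of_zero_le hn
    have h := f4 (m + 1)
    have hne : ¬ Even (m + 1) := by
      rw [Int.even_coe_nat] at he
      simpa [Nat.even_add_one] using he
    rw [if_neg hne] at h
    rw [hd m (m + 1) (by push_cast; ring), hd (m + 1) (m + 2) (by push_cast; ring),
      hd (m + 2) (m + 3) (by push_cast; ring), h]
    have e : ((m + 1 : ℕ) : ℤ) + 1 = m + 2 := by push_cast; ring
    simp only [K]; rw [e]; ring
  · intro n hn ho
    obtain ⟨m, hm⟩ := Int.eq_ofNat_of_zero_le (show 0 ≤ n + 1 by omega)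
    obtain rfl : n = (m : ℤ) - 1 := by omega
    have h := f4 m
    have hev : Even m := by
      rw [← Int.even_coe_nat]
      obtain ⟨t, ht⟩ := ho
      exact ⟨t + 1, by omega⟩
    rw [if_pos hev] at h
    have hs : ∀ s : ℕ, a ^ s * d (((m : ℤ) - 1 + 1) + 4 * s + 2)
        = a ^ s * f (m + 3 + 4 * s) / f 0 := fun s => by
      rw [hd _ (m + 3 + 4 * s) (by push_cast; ring)]; ring
    simp only [hs]
    rw [tsum_div_const, hd _ m (by ring), hd _ (m + 1) (by push_cast; ring),
      hd _ (m + 2) (by push_cast; ring), h]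
    have e : (m : ℤ) - 1 + 2 = m + 1 := by ring
    simp only [K]; rw [e]; ring
  · intro n hn
    obtain ⟨m, hm⟩ := Int.eq_ofNat_of_zero_le (show 0 ≤ n + 1 by omega)
    obtain rfl : n = (m : ℤ) - 1 := by omega
    have hab : |(q ((m : ℤ) - 1) : ℝ) * ρ - (p ((m : ℤ) - 1) : ℝ)| = D m := by
      rw [← abs_of_pos (hDpos m)]
      simp only [D, P, Q]
      rw [abs_mul, abs_pow, abs_neg, abs_one, one_pow, one_mul, abs_sub_comm]
    have e : (m : ℤ) - 1 + 2 = m + 1 := by ring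
    rw [hab, hd _ m (by ring), mul_div_cancel₀ _ hf0'.ne', e]
    have hKp : 0 < K m := by linarith [hK1 m]
    refine ⟨Real.log_nonneg ((one_le_div (hDpos m)).2 (f1 m)), ?_⟩
    have h1 : Real.log (f m / D m) ≤ (a - 1) / K m := by
      rw [Real.log_le_iff_le_exp (div_pos (hfp m) (hDpos m)), div_le_iff₀ (hDpos m)]
      exact f2 m
    have h2 : 0 < (a - 1) / K m := div_pos (by linarith) hKp
    have h3 : 2 * (a - 1) / (k ((m : ℤ) + 1) : ℝ) = 2 * ((a - 1) / K m) := by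
      simp only [K]; ring
    rw [h3]
    linarith
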